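/- Let (A, +, ∘) be a strongly nilpotent ℚ-brace, and for a, b ∈ A let a·b denote the derived product (the weak limit of 2^n·(((1/2^n)·a)*b)). Then for all a, b ∈ A, the element a·b − a*b lies in the ℚ-linear span of the set of all iterated *-products (with any distribution of brackets) consisting of at least two copies of a followed by a single final factor b. -/

import Mathlib

/-!
For a fixed right factor `c`, the map `u ↦ u * c` of a brace is not additive, but its defect
`(u + v) * c - u * c - v * c` satisfies
`defect (u, v) = u * (v * c) - (u * v) * c - defect (u + v, u * v)`,
and the second argument becomes a longer and longer product, so in the strongly nilpotent case the
defect is an alternating sum of triple products (`sub_mem_of_step`).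

Let `T t k` be the span of the words with at least `k` copies of `a` (ending in `b` if `t = true`),
and write `I m` for the strong chain, which is a descending chain of `ℚ`-subspaces. The key fact is
`T false j * T t k ⊆ T t (j + k)`: the span of words is closed under `*` even though `*` is
not linear on the left. It is proved modulo `I m` by induction on `m` (`closed_all`). If it holds
modulo `I m`, then, since `I m * A` and `A * I m` lie in `I (m + 1)`, a descending induction on
`j + k` shows that `u ↦ u * c` is additive modulo `T t (j + k) + I (m + 1)` on `T false j`
(`defect_mem`). An additive map between `ℚ`-vector spaces is `ℚ`-linear, so it suffices to
check that words are sent to words.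

The same defect estimate says that `u ↦ u * b` is additive, hence `ℚ`-linear, on `T false 1` modulo
`T true 2`. So `2 ^ n • ((1 / 2 ^ n) • a * b)` is congruent to `a * b` modulo `T true 2` for
all `n`, and every linear functional vanishing on `T true 2` takes the same value on `a * b` and
on the weak limit `a · b`.
-/

open Filter Topology

/-- A left brace: an abelian group `(A, +)` together with a group operation `∘`
satisfying `a ∘ (b + c) + a = a ∘ b + a ∘ c`. -/
structure LeftBrace (A : Type*) [AddCommGroup A] where
  circ : A → A → A
  one : A
  inv : A → A
  circ_assoc : ∀ a b c : A, circ (circ a b) c = circ a (circ b c)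
  one_circ : ∀ a : A, circ one a = a
  circ_one : ∀ a : A, circ a one = a
  inv_circ : ∀ a : A, circ (inv a) a = one
  left_dist : ∀ a b c : A, circ a (b + c) + a = circ a b + circ a c

/-- `a * b = a ∘ b - a - b`. -/
def LeftBrace.star {A : Type*} [AddCommGroup A] (B : LeftBrace A) (a b : A) : A :=
  B.circ a b - a - b

/-- The strong radical chain: `strongChain B m` is `A^[m+1]`; `A^[1] = A` and for
`i > 1`, `A^[i]` is the additive subgroup generated by all `a * b` with
`a ∈ A^[j]`, `b ∈ A^[i-j]`, `0 < j < i`. (Inside the binder `j ≤ m` we have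
`min j m = j`, so the generating set below is exactly the intended one.) -/
def LeftBrace.strongChain {A : Type*} [AddCommGroup A] (B : LeftBrace A) : ℕ → AddSubgroup A
  | 0 => ⊤
  | (m+1) => AddSubgroup.closure
      {x : A | ∃ j ≤ m, ∃ u ∈ LeftBrace.strongChain B (min j m),
        ∃ v ∈ LeftBrace.strongChain B (m - j), x = B.star u v}
termination_by n => n
decreasing_by
  · exact Nat.lt_succ_of_le (Nat.min_le_right j m)
  · exact Nat.lt_succ_of_le (Nat.sub_le m j)

/-- A brace is strongly nilpotent if `A^[n] = 0` for some `n`. -/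
def LeftBrace.StronglyNilpotent {A : Type*} [AddCommGroup A] (B : LeftBrace A) : Prop :=
  ∃ n : ℕ, B.strongChain n = ⊥

/-- A ℚ-brace: the additive group is a ℚ-vector space and `a * (e • b) = e • (a * b)`. -/
def LeftBrace.IsQBrace {A : Type*} [AddCommGroup A] [Module ℚ A] (B : LeftBrace A) : Prop :=
  ∀ (e : ℚ) (a b : A), B.star a (e • b) = e • B.star a b

/-- `mul` is the derived product of the brace `B`: `mul a b` is the weak limit of
`2^n • (((1/2^n) • a) * b)`. -/
def LeftBrace.IsDerivedMul {A : Type*} [AddCommGroup A] [Module ℚ A] (B : LeftBrace A)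
    (mul : A → A → A) : Prop :=
  ∀ a b : A, ∀ φ : A →ₗ[ℚ] ℚ,
    Tendsto (fun n : ℕ =>
        ((φ ((2 ^ n : ℚ) • B.star (((1 : ℚ) / 2 ^ n) • a) b) : ℚ) : ℝ))
      atTop (𝓝 ((φ (mul a b) : ℚ) : ℝ))

/-- `StarWord B x y w n t` says `w` is an iterated `*`-product whose leaves are
`n` copies of `x` and, if `t = true`, a single copy of `y` as the rightmost
(final) leaf. -/
inductive StarWord {A : Type*} [AddCommGroup A] (B : LeftBrace A) (x y : A) :
    A → ℕ → Bool → Prop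
  | base_x : StarWord B x y x 1 false
  | base_y : StarWord B x y y 0 true
  | node {u v : A} {n m : ℕ} {t : Bool} :
      StarWord B x y u n false → StarWord B x y v m t →
      StarWord B x y (B.star u v) (n + m) t

namespace LeftBrace

variable {A : Type*} [AddCommGroup A]

/-! ### Identities for the star product -/

lemma star_add (B : LeftBrace A) (a b c : A) :
    B.star a (b + c) = B.star a b + B.star a c := by
  have h := B.left_dist a b c
  have h' : B.circ a (b + c) = B.circ a b + B.circ a c - a := eq_sub_of_add_eq h
  simp only [star, h']
  abel

lemma star_zero (B : LeftBrace A) (a : A) : B.star a 0 = 0 := by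
  have h := B.star_add a 0 0
  simpa using h

lemma zero_star (B : LeftBrace A) (c : A) : B.star 0 c = 0 := by
  have h1 := B.star_zero B.one
  have h2 : B.one = 0 := by
    simp only [star, B.one_circ] at h1
    simpa using h1
  simp only [star]
  rw [← h2, B.one_circ, h2]
  abel

lemma circ_eq (B : LeftBrace A) (u v : A) : B.circ u v = u + v + B.star u v := by
  simp only [star]
  abel

/-- Associativity of `∘`, written in terms of `*`. -/
lemma star_circ (B : LeftBrace A) (u v c : A) :
    B.star (u + v + B.star u v) c = B.star u c + B.star v c + B.star u (B.star v c) := by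
  have h := B.circ_assoc u v c
  rw [B.circ_eq u v, B.circ_eq _ c, B.circ_eq v c, B.circ_eq u, star_add, star_add] at h
  have h2 : B.star (u + v + B.star u v) c
      = (u + v + B.star u v + c + B.star (u + v + B.star u v) c)
        - (u + v + B.star u v + c) := by abel
  rw [h2, h]
  abel

/-- The recursion for the additivity defect of `u ↦ u * c`. -/
lemma defect_eq (B : LeftBrace A) (u v c : A) :
    B.star (u + v) c - B.star u c - B.star v c
      = B.star u (B.star v c) - B.star (B.star u v) c
        - (B.star (u + v + B.star u v) c - B.star (u + v) c - B.star (B.star u v) c) := by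
  rw [star_circ]
  abel

/-- Iterating the recursion for the defect: `R i` records what is known about the pair after
`i` steps `(u, v) ↦ (u + v, u * v)`. -/
lemma sub_mem_of_step (B : LeftBrace A) (M : AddSubgroup A) (c : A) (R : ℕ → A → A → Prop) (N : ℕ)
    (hstep : ∀ i u v, R i u v → R (i + 1) (u + v) (B.star u v))
    (hM : ∀ i u v, R i u v → B.star u (B.star v c) - B.star (B.star u v) c ∈ M)
    (hN : ∀ i u v, N ≤ i → R i u v → B.star (u + v) c - B.star u c - B.star v c ∈ M)
    (i : ℕ) (u v : A) (h : R i u v) : B.star (u + v) c - B.star u c - B.star v c ∈ M := by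
  by_cases hi : N ≤ i
  · exact hN i u v hi h
  · rw [defect_eq]
    exact M.sub_mem (hM i u v h)
      (sub_mem_of_step B M c R N hstep hM hN (i + 1) _ _ (hstep i u v h))
termination_by N - i

/-! ### The strong chain -/

lemma star_mem_chain (B : LeftBrace A) {i j : ℕ} {u v : A} (hu : u ∈ B.strongChain i)
    (hv : v ∈ B.strongChain j) : B.star u v ∈ B.strongChain (i + j + 1) := by
  rw [strongChain]
  refine AddSubgroup.subset_closure ⟨i, by omega, u, ?_, v, ?_, rfl⟩
  · rwa [min_eq_left (by omega)]
  · rwa [Nat.add_sub_cancel_left]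

lemma mem_chain_zero (B : LeftBrace A) (u : A) : u ∈ B.strongChain 0 := by
  rw [strongChain]
  trivial

lemma chain_succ_le (B : LeftBrace A) (m : ℕ) : B.strongChain (m + 1) ≤ B.strongChain m := by
  induction m using Nat.strong_induction_on with
  | _ m ih =>
    rw [strongChain, AddSubgroup.closure_le]
    rintro _ ⟨j, hj, u, hu, v, hv, rfl⟩
    rw [min_eq_left hj] at hu
    rcases m with _ | m
    · exact B.mem_chain_zero _
    · rcases j with _ | j
      · have := B.star_mem_chain hu (ih m (by omega) hv)
        simpa using this
      · have := B.star_mem_chain (ih j (by omega) hu) hv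
        have e : j + (m + 1 - (j + 1)) + 1 = m + 1 := by omega
        rwa [e] at this

lemma chain_anti (B : LeftBrace A) : Antitone B.strongChain :=
  antitone_nat_of_succ_le B.chain_succ_le

/-- A word with `n` copies of `a` lies in `A^[n]` (in `A^[1] = A` if `n = 0`), whether or not it
ends in `b`. -/
lemma word_mem_chain (B : LeftBrace A) (a b : A) {w : A} {n : ℕ} {t : Bool}
    (h : StarWord B a b w n t) : (t = false → 1 ≤ n) ∧ w ∈ B.strongChain (n - 1) := by
  induction h with
  | base_x => exact ⟨fun _ => le_rfl, B.mem_chain_zero _⟩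
  | base_y => exact ⟨fun h => by simp at h, B.mem_chain_zero _⟩
  | node _ _ hu hv =>
    refine ⟨fun _ => ?_, ?_⟩
    · have := hu.1 rfl
      omega
    · exact B.chain_anti (by omega) (B.star_mem_chain hu.2 hv.2)

variable [Module ℚ A]

lemma smul_mem_chain (B : LeftBrace A) (hQ : B.IsQBrace) (m : ℕ) :
    ∀ (q : ℚ) (u : A), u ∈ B.strongChain m → q • u ∈ B.strongChain m := by
  induction m using Nat.strong_induction_on with
  | _ m ih =>
    intro q u hu
    rcases m with _ | m
    · exact B.mem_chain_zero _
    · rw [strongChain] at hu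
      induction hu using AddSubgroup.closure_induction with
      | mem x hx =>
        obtain ⟨j, hj, u, hu, v, hv, rfl⟩ := hx
        rw [min_eq_left hj] at hu
        rw [← hQ]
        have := B.star_mem_chain hu (ih (m - j) (by omega) q v hv)
        have e : j + (m - j) + 1 = m + 1 := by omega
        rwa [e] at this
      | zero => rw [smul_zero]; exact zero_mem _
      | add x y _ _ hx hy => rw [smul_add]; exact add_mem hx hy
      | neg x _ hx => rw [smul_neg]; exact neg_mem hx

/-- The strong chain as a chain of `ℚ`-subspaces; `B.I hQ m` is `A^[m+1]`. -/
def I (B : LeftBrace A) (hQ : B.IsQBrace) (m : ℕ) : Submodule ℚ A :=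
  { B.strongChain m with smul_mem' := fun q u hu => B.smul_mem_chain hQ m q u hu }

lemma mem_I {B : LeftBrace A} {hQ : B.IsQBrace} {m : ℕ} {u : A} :
    u ∈ B.I hQ m ↔ u ∈ B.strongChain m := Iff.rfl

lemma I_anti (B : LeftBrace A) (hQ : B.IsQBrace) : Antitone (B.I hQ) :=
  fun _ _ h _ hu => B.chain_anti h hu

lemma star_mem_I_left (B : LeftBrace A) (hQ : B.IsQBrace) {m : ℕ} {u : A} (v : A)
    (hu : u ∈ B.I hQ m) : B.star u v ∈ B.I hQ (m + 1) :=
  B.star_mem_chain hu (B.mem_chain_zero v)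

lemma star_mem_I_right (B : LeftBrace A) (hQ : B.IsQBrace) {m : ℕ} (u : A) {v : A}
    (hv : v ∈ B.I hQ m) : B.star u v ∈ B.I hQ (m + 1) := by
  have := B.star_mem_chain (B.mem_chain_zero u) hv
  rwa [Nat.zero_add] at this

lemma defect_mem_I (B : LeftBrace A) (hQ : B.IsQBrace) (hSN : B.StronglyNilpotent) {m : ℕ}
    (u c : A) {v : A} (hv : v ∈ B.I hQ m) :
    B.star (u + v) c - B.star u c - B.star v c ∈ B.I hQ (m + 1) := by
  obtain ⟨N, hN⟩ := hSN
  refine B.sub_mem_of_step (B.I hQ (m + 1)).toAddSubgroup c (fun i _ v => v ∈ B.I hQ (m + i)) N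
    ?_ ?_ ?_ 0 u v hv
  · intro i u v h
    exact B.star_mem_I_right hQ u h
  · intro i u v h
    have h' : v ∈ B.I hQ m := B.I_anti hQ (by omega) h
    have h1 := B.star_mem_I_right hQ u (B.star_mem_I_left hQ c h')
    have h2 := B.star_mem_I_left hQ c (B.star_mem_I_right hQ u h')
    exact (B.I hQ (m + 1)).sub_mem (B.I_anti hQ (by omega) h1) (B.I_anti hQ (by omega) h2)
  · intro i u v hi h
    have h' : v ∈ B.strongChain N := B.chain_anti (show N ≤ m + i by omega) h
    rw [hN, AddSubgroup.mem_bot] at h'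
    simp [h', B.zero_star]

/-- `u ↦ u * c` modulo `I (m + 1)` does not change when `u` is moved by an element of `I m`. -/
lemma star_add_sub_mem_I (B : LeftBrace A) (hQ : B.IsQBrace) (hSN : B.StronglyNilpotent) {m : ℕ}
    (u c : A) {v : A} (hv : v ∈ B.I hQ m) :
    B.star (u + v) c - B.star u c ∈ B.I hQ (m + 1) := by
  have h := add_mem (B.defect_mem_I hQ hSN u c hv) (B.star_mem_I_left hQ c hv)
  simpa using h

/-! ### Spans of words -/

/-- The span of the iterated `*`-products in at least `k` copies of `a`, with the single final
factor `b` if `t = true`. -/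
def T (B : LeftBrace A) (a b : A) (t : Bool) (k : ℕ) : Submodule ℚ A :=
  Submodule.span ℚ {w | ∃ n, StarWord B a b w n t ∧ k ≤ n}

lemma T_anti (B : LeftBrace A) (a b : A) (t : Bool) : Antitone (B.T a b t) := by
  intro i j h
  refine Submodule.span_mono ?_
  rintro w ⟨n, hw, hn⟩
  exact ⟨n, hw, h.trans hn⟩

lemma T_le_I (B : LeftBrace A) (hQ : B.IsQBrace) (a b : A) (t : Bool) {k m : ℕ} (h : m + 1 ≤ k) :
    B.T a b t k ≤ B.I hQ m := by
  refine Submodule.span_le.2 ?_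
  rintro w ⟨n, hw, hn⟩
  exact B.chain_anti (by omega) (B.word_mem_chain a b hw).2

/-- Since `*` is linear on the right, words multiply spans of words into spans of words. -/
lemma star_word_mem (B : LeftBrace A) (hQ : B.IsQBrace) {a b : A} {t : Bool} {n j k : ℕ} {w c : A}
    (hw : StarWord B a b w n false) (hj : j ≤ n) (hc : c ∈ B.T a b t k) :
    B.star w c ∈ B.T a b t (j + k) := by
  induction hc using Submodule.span_induction with
  | mem x hx =>
    obtain ⟨m, hx, hm⟩ := hx
    exact Submodule.subset_span ⟨n + m, .node hw hx, by omega⟩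
  | zero => rw [star_zero]; exact zero_mem _
  | add x y _ _ hx hy => rw [star_add]; exact add_mem hx hy
  | smul q x _ hx => rw [hQ]; exact Submodule.smul_mem _ q hx

/-- A map which is additive modulo `M` on a `ℚ`-subspace is `ℚ`-homogeneous modulo `M` there. -/
lemma smul_sub_mem {S M : Submodule ℚ A} (f : A → A)
    (hf : ∀ u ∈ S, ∀ v ∈ S, f (u + v) - f u - f v ∈ M) (q : ℚ) {u : A} (hu : u ∈ S) :
    f (q • u) - q • f u ∈ M := by
  let g : S →+ A ⧸ M := AddMonoidHom.mk' (fun u => M.mkQ (f u)) (by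
    intro u v
    have h := hf u u.2 v v.2
    rw [← Submodule.ker_mkQ M, LinearMap.mem_ker, map_sub, map_sub, sub_sub, sub_eq_zero] at h
    exact h)
  have h : g (q • ⟨u, hu⟩) = q • g ⟨u, hu⟩ := map_rat_smul g q _
  rw [← Submodule.ker_mkQ M, LinearMap.mem_ker, map_sub, sub_eq_zero, map_smul]
  exact h

/-! ### Closure of the spans of words under the star product -/

/-- `T false j * T t k ⊆ T t (j + k)` modulo `I m`, at the given indices. -/
def Closed (B : LeftBrace A) (hQ : B.IsQBrace) (a b : A) (t : Bool) (m j k : ℕ) : Prop :=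
  ∀ u ∈ B.T a b false j, ∀ c ∈ B.T a b t k, B.star u c ∈ B.T a b t (j + k) ⊔ B.I hQ m

/-- A product modulo `I (m + 1)` depends only on its factors modulo `I m`, so the factors in
`Closed` may be perturbed by `I m`. -/
lemma closed_sup (B : LeftBrace A) (hQ : B.IsQBrace) (hSN : B.StronglyNilpotent) {a b : A}
    {t : Bool} {m j k : ℕ} (h : B.Closed hQ a b t (m + 1) j k) {u c : A}
    (hu : u ∈ B.T a b false j ⊔ B.I hQ m) (hc : c ∈ B.T a b t k ⊔ B.I hQ m) :
    B.star u c ∈ B.T a b t (j + k) ⊔ B.I hQ (m + 1) := by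
  obtain ⟨u, hu₁, u', hu', rfl⟩ := Submodule.mem_sup.1 hu
  obtain ⟨c, hc₁, c', hc', rfl⟩ := Submodule.mem_sup.1 hc
  have h1 := B.star_add_sub_mem_I hQ hSN u (c + c') hu'
  have h2 := B.star_mem_I_right hQ u hc'
  have h3 := add_mem (h u hu₁ c hc₁) (Submodule.mem_sup_right (add_mem h1 h2))
  rw [B.star_add u] at h3
  convert h3 using 1
  abel

lemma closed_sup_self (B : LeftBrace A) (hQ : B.IsQBrace) (hSN : B.StronglyNilpotent) {a b : A}
    {t : Bool} {m j k : ℕ} (h : B.Closed hQ a b t m j k) {u c : A}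
    (hu : u ∈ B.T a b false j ⊔ B.I hQ m) (hc : c ∈ B.T a b t k ⊔ B.I hQ m) :
    B.star u c ∈ B.T a b t (j + k) ⊔ B.I hQ m := by
  obtain ⟨u, hu₁, u', hu', rfl⟩ := Submodule.mem_sup.1 hu
  obtain ⟨c, hc₁, c', hc', rfl⟩ := Submodule.mem_sup.1 hc
  have h1 := B.star_add_sub_mem_I hQ hSN u (c + c') hu'
  have h2 := B.star_mem_I_right hQ u hc'
  have h4 := B.I_anti hQ (Nat.le_succ m) (add_mem h1 h2)
  have h3 := add_mem (h u hu₁ c hc₁) (Submodule.mem_sup_right h4)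
  rw [B.star_add u] at h3
  convert h3 using 1
  abel

/-- Closure modulo `I m`, together with closure modulo `I (m + 1)` in larger total degree, makes
`u ↦ u * c` additive modulo `T t (2 j + k) + I (m + 1)`. -/
lemma defect_mem (B : LeftBrace A) (hQ : B.IsQBrace) (hSN : B.StronglyNilpotent) {a b : A}
    {t : Bool} {m j k : ℕ} (hj : 1 ≤ j)
    (hm : ∀ t j k, 1 ≤ j → B.Closed hQ a b t m j k)
    (hbig : ∀ j' k', 1 ≤ j' → j + k < j' + k' → B.Closed hQ a b t (m + 1) j' k')
    {u v c : A} (hu : u ∈ B.T a b false j) (hv : v ∈ B.T a b false j) (hc : c ∈ B.T a b t k) :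
    B.star (u + v) c - B.star u c - B.star v c ∈ B.T a b t (j + j + k) ⊔ B.I hQ (m + 1) := by
  have hc' : c ∈ B.T a b t k ⊔ B.I hQ m := Submodule.mem_sup_left hc
  have mono : ∀ (t : Bool) {p q r : ℕ}, q ≤ p → B.T a b t p ⊔ B.I hQ r ≤ B.T a b t q ⊔ B.I hQ r :=
    fun t _ _ _ h => sup_le_sup_right (B.T_anti a b t h) _
  refine B.sub_mem_of_step (B.T a b t (j + j + k) ⊔ B.I hQ (m + 1)).toAddSubgroup c
    (fun i u v => u ∈ B.T a b false j ⊔ B.I hQ m ∧ v ∈ B.T a b false (j + i) ⊔ B.I hQ m) (m + 1)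
    ?_ ?_ ?_ 0 u v ⟨Submodule.mem_sup_left hu, Submodule.mem_sup_left hv⟩
  · rintro i u v ⟨hu, hv⟩
    refine ⟨add_mem hu (mono false (by omega) hv), ?_⟩
    exact mono false (by omega) (B.closed_sup_self hQ hSN (hm false j (j + i) hj) hu hv)
  · rintro i u v ⟨hu, hv⟩
    have h1 := B.closed_sup_self hQ hSN (hm t (j + i) k (by omega)) hv hc'
    have h2 := B.closed_sup hQ hSN (hbig j (j + i + k) hj (by omega)) hu h1
    have h3 := B.closed_sup_self hQ hSN (hm false j (j + i) hj) hu hv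
    have h4 := B.closed_sup hQ hSN (hbig (j + (j + i)) k (by omega) (by omega)) h3 hc'
    exact (B.T a b t (j + j + k) ⊔ B.I hQ (m + 1)).sub_mem
      (mono t (by omega) h2) (mono t (by omega) h4)
  · rintro i u v hi ⟨hu, hv⟩
    -- a word in more than `m` letters lies in `I m`
    have hvI : v ∈ B.I hQ m := by
      rwa [sup_eq_right.2 (B.T_le_I hQ a b false (by omega))] at hv
    exact Submodule.mem_sup_right (B.defect_mem_I hQ hSN u c hvI)

/-- The inductive step in `m`, by descending induction on `j + k`; for `j + k ≥ 2 m + 2` one of the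
factors already lies in `I m`. -/
lemma closed_succ (B : LeftBrace A) (hQ : B.IsQBrace) (hSN : B.StronglyNilpotent) {a b : A}
    {m : ℕ} (hm : ∀ t j k, 1 ≤ j → B.Closed hQ a b t m j k) (t : Bool) (j k : ℕ) (hj : 1 ≤ j) :
    B.Closed hQ a b t (m + 1) j k := by
  by_cases hbase : 2 * m + 2 ≤ j + k
  · intro u hu c hc
    refine Submodule.mem_sup_right ?_
    by_cases h : m + 1 ≤ j
    · exact B.star_mem_I_left hQ c (B.T_le_I hQ a b false h hu)
    · exact B.star_mem_I_right hQ u (B.T_le_I hQ a b t (show m + 1 ≤ k by omega) hc)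
  · have hbig : ∀ j' k', 1 ≤ j' → j + k < j' + k' → B.Closed hQ a b t (m + 1) j' k' :=
      fun j' k' hj' _ => closed_succ B hQ hSN hm t j' k' hj'
    intro u hu c hc
    have hadd : ∀ u ∈ B.T a b false j, ∀ v ∈ B.T a b false j,
        B.star (u + v) c - B.star u c - B.star v c ∈ B.T a b t (j + k) ⊔ B.I hQ (m + 1) :=
      fun u hu v hv => sup_le_sup_right (B.T_anti a b t (by omega)) _
        (B.defect_mem hQ hSN hj hm hbig hu hv hc)
    refine Submodule.span_induction (p := fun u _ =>
      B.star u c ∈ B.T a b t (j + k) ⊔ B.I hQ (m + 1)) ?_ ?_ ?_ ?_ hu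
    · rintro w ⟨n, hw, hn⟩
      exact Submodule.mem_sup_left (B.star_word_mem hQ hw hn hc)
    · rw [zero_star]
      exact zero_mem _
    · intro x y hx hy h1 h2
      have := add_mem (hadd x hx y hy) (add_mem h1 h2)
      convert this using 1
      abel
    · intro q x hx h1
      have := add_mem (smul_sub_mem (fun u => B.star u c) hadd q hx) (Submodule.smul_mem _ q h1)
      simpa using this
termination_by 2 * m + 2 - (j + k)

lemma closed_all (B : LeftBrace A) (hQ : B.IsQBrace) (hSN : B.StronglyNilpotent) (a b : A)
    (m : ℕ) : ∀ t j k, 1 ≤ j → B.Closed hQ a b t m j k := by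
  induction m with
  | zero => exact fun _ _ _ _ _ _ _ _ => Submodule.mem_sup_right (B.mem_chain_zero _)
  | succ m ih => exact B.closed_succ hQ hSN ih

/-- `u ↦ u * b` is homogeneous at `a` modulo words containing `a` at least twice. -/
lemma smul_star_sub_mem (B : LeftBrace A) (hQ : B.IsQBrace) (hSN : B.StronglyNilpotent) (a b : A)
    (q : ℚ) : B.star (q • a) b - q • B.star a b ∈ B.T a b true 2 := by
  obtain ⟨N, hN⟩ := id hSN
  have hI : B.I hQ (N + 1) = ⊥ := by
    rw [eq_bot_iff]
    intro u hu
    have h' : u ∈ B.strongChain N := B.chain_anti (Nat.le_succ N) hu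
    rw [hN] at h'
    exact h'
  have ha : a ∈ B.T a b false 1 := Submodule.subset_span ⟨1, .base_x, le_rfl⟩
  have hb : b ∈ B.T a b true 0 := Submodule.subset_span ⟨0, .base_y, le_rfl⟩
  refine smul_sub_mem (S := B.T a b false 1) (fun u => B.star u b) (fun u hu v hv => ?_) q ha
  have h := B.defect_mem hQ hSN le_rfl (B.closed_all hQ hSN a b N)
    (fun j k hj _ => B.closed_all hQ hSN a b (N + 1) true j k hj) hu hv hb
  rwa [hI, sup_bot_eq] at h

end LeftBrace

theorem statement14 {A : Type*} [AddCommGroup A] [Module ℚ A] (B : LeftBrace A)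
    (hQ : B.IsQBrace) (hSN : B.StronglyNilpotent)
    (mul : A → A → A) (hmul : B.IsDerivedMul mul) (a b : A) :
    mul a b - B.star a b
      ∈ Submodule.span ℚ {w : A | ∃ n : ℕ, StarWord B a b w n true ∧ 2 ≤ n} := by
  by_contra hz
  obtain ⟨φ, hφz, hφ⟩ := Submodule.exists_le_ker_of_notMem hz
  have hconst : ∀ n : ℕ,
      φ ((2 ^ n : ℚ) • B.star (((1 : ℚ) / 2 ^ n) • a) b) = φ (B.star a b) := by
    intro n
    have h := hφ (B.smul_star_sub_mem hQ hSN a b ((1 : ℚ) / 2 ^ n))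
    rw [LinearMap.mem_ker, map_sub, sub_eq_zero] at h
    rw [map_smul, h, map_smul, smul_smul, mul_one_div_cancel (by positivity), one_smul]
  have hlim := hmul a b φ
  simp only [hconst] at hlim
  have h := tendsto_nhds_unique tendsto_const_nhds hlim
  apply hφz
  rw [map_sub, sub_eq_zero]
  exact_mod_cast h.symm
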